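/- arXiv:2012.08411 — 2 statements merged into one kernel-verified Lean document; each statement's English description precedes it below -/
import Mathlib

section
/- Let T be a linear operator on an md-dimensional vector space V over F_q, where m, d are positive integers. Then [((d−1)m,(d−2)m),((d−2)m,(d−3)m),…,(2m,m),(m,0)]_T is exactly the set of (d−1)-tuples (⊕_{i=0}^{d−2} T^i W, ⊕_{i=0}^{d−3} T^i W, …, W ⊕ TW, W) where W ranges over m-dimensional subspaces of V with ⊕_{i=0}^{d−1} T^i W = V. In particular, σ(m,d;T) = |[((d−1)m,(d−2)m),((d−2)m,(d−3)m),…,(2m,m),(m,0)]_T|. -/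
/-- The set `(a,b)_T` of subspaces `W` with `dim W = a` and `dim (W ∩ T⁻¹W) = b`. -/
def pairSet {F V : Type*} [Field F] [AddCommGroup V] [Module F V]
    (T : V →ₗ[F] V) (a b : ℕ) : Set (Submodule F V) :=
  {W | Module.finrank F W = a ∧ Module.finrank F ↥(W ⊓ W.comap T) = b}

/-- The set `[(a₁,₁,a₁,₂),…,(a_r,₁,a_r,₂)]_T`. -/
def tupleSet {F V : Type*} [Field F] [AddCommGroup V] [Module F V]
    (T : V →ₗ[F] V) (r : ℕ) (a : Fin r → ℕ × ℕ) : Set (Fin r → Submodule F V) :=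
  {W | (∀ i, W i ∈ pairSet T (a i).1 (a i).2) ∧
    ∀ (i : Fin r) (h : (i : ℕ) + 1 < r),
      W ⟨(i : ℕ) + 1, h⟩ ⊔ (W ⟨(i : ℕ) + 1, h⟩).map T ≤ W i}

/-- `W` is an `m`-dimensional `T`-splitting subspace: `V = W ⊕ TW ⊕ ⋯ ⊕ T^{d-1}W`. -/
def IsSplittingSubspace {F V : Type*} [Field F] [AddCommGroup V] [Module F V]
    (T : V →ₗ[F] V) (m d : ℕ) (W : Submodule F V) : Prop :=
  Module.finrank F W = m ∧
  iSupIndep (fun i : Fin d => W.map (T ^ (i : ℕ))) ∧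
  (⨆ i : Fin d, W.map (T ^ (i : ℕ))) = ⊤

/-- `σ(m,d;T)`, the number of `m`-dimensional `T`-splitting subspaces. -/
noncomputable def splitCount {F V : Type*} [Field F] [AddCommGroup V] [Module F V]
    (T : V →ₗ[F] V) (m d : ℕ) : ℕ :=
  Set.ncard {W : Submodule F V | IsSplittingSubspace T m d W}

open Module in
theorem aux_dim {F V : Type*} [Field F] [AddCommGroup V] [Module F V] [FiniteDimensional F V]
    (T : V →ₗ[F] V) (U : Submodule F V) :
    finrank F ↥(U ⊔ U.map T) + finrank F ↥(U ⊓ U.comap T) = 2 * finrank F U := by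
  let g : U →ₗ[F] (V ⧸ U) := U.mkQ ∘ₗ T ∘ₗ U.subtype
  have h1 := LinearMap.finrank_range_add_finrank_ker g
  have hk : (LinearMap.ker g).map U.subtype = U ⊓ U.comap T := by
    ext x
    simp [g, Submodule.mem_map, and_comm]
  have hk2 : finrank F (LinearMap.ker g) = finrank F ↥(U ⊓ U.comap T) := by
    rw [← hk]
    exact (LinearEquiv.finrank_eq (Submodule.equivMapOfInjective _ U.injective_subtype _))
  have hr : LinearMap.range g = (U ⊔ U.map T).map U.mkQ := by
    rw [Submodule.map_sup]
    have : U.map U.mkQ = ⊥ := by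
      rw [eq_bot_iff, Submodule.map_le_iff_le_comap]
      intro x hx
      simpa using hx
    rw [this, bot_sup_eq]
    simp [g, LinearMap.range_comp]
  have h2 := LinearMap.finrank_range_add_finrank_ker (U.mkQ.domRestrict (U ⊔ U.map T))
  have hr2 : LinearMap.range (U.mkQ.domRestrict (U ⊔ U.map T)) = (U ⊔ U.map T).map U.mkQ := by
    rw [LinearMap.domRestrict, LinearMap.range_comp, Submodule.range_subtype]
  have hk3 : (LinearMap.ker (U.mkQ.domRestrict (U ⊔ U.map T))).map (U ⊔ U.map T).subtype = U := by
    ext x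
    simp only [Submodule.mem_map, LinearMap.mem_ker, LinearMap.domRestrict_apply,
      Submodule.mkQ_apply, Submodule.Quotient.mk_eq_zero, Submodule.subtype_apply]
    constructor
    · rintro ⟨y, hy, rfl⟩; exact hy
    · intro hx; exact ⟨⟨x, le_sup_left (a := U) hx⟩, hx, rfl⟩
  have hk4 : finrank F (LinearMap.ker (U.mkQ.domRestrict (U ⊔ U.map T))) = finrank F U := by
    conv_rhs => rw [← hk3]
    exact (LinearEquiv.finrank_eq
      (Submodule.equivMapOfInjective _ (Submodule.injective_subtype _) _))
  rw [hr2, ← hr, hk4] at h2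
  omega

/-- partial sums -/
def auxS {F V : Type*} [Field F] [AddCommGroup V] [Module F V]
    (T : V →ₗ[F] V) (W : Submodule F V) (n : ℕ) : Submodule F V :=
  ⨆ i : Fin n, W.map (T ^ (i : ℕ))

theorem auxS_le {F V : Type*} [Field F] [AddCommGroup V] [Module F V]
    (T : V →ₗ[F] V) (W : Submodule F V) {i n : ℕ} (h : i < n) :
    W.map (T ^ i) ≤ auxS T W n :=
  le_iSup (fun i : Fin n => W.map (T ^ (i : ℕ))) ⟨i, h⟩

theorem auxS_one {F V : Type*} [Field F] [AddCommGroup V] [Module F V]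
    (T : V →ₗ[F] V) (W : Submodule F V) : auxS T W 1 = W := by
  apply le_antisymm
  · apply iSup_le
    intro i
    have : (i : ℕ) = 0 := by omega
    rw [this, pow_zero]
    exact (Submodule.map_id W).le
  · have := auxS_le T W (i := 0) (n := 1) (by omega)
    rw [pow_zero] at this
    exact (Submodule.map_id W).ge.trans this

theorem auxS_succ {F V : Type*} [Field F] [AddCommGroup V] [Module F V]
    (T : V →ₗ[F] V) (W : Submodule F V) (n : ℕ) :
    auxS T W (n + 1) = auxS T W n ⊔ W.map (T ^ n) := by
  apply le_antisymm
  · apply iSup_le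
    intro i
    rcases Nat.lt_succ_iff_lt_or_eq.mp i.2 with h | h
    · exact (auxS_le T W h).trans le_sup_left
    · rw [h]; exact le_sup_right
  · apply sup_le
    · exact iSup_le fun i => auxS_le T W (by omega)
    · exact auxS_le T W (by omega)

theorem auxS_map {F V : Type*} [Field F] [AddCommGroup V] [Module F V]
    (T : V →ₗ[F] V) (W : Submodule F V) (n : ℕ) (hn : 0 < n) :
    auxS T W n ⊔ (auxS T W n).map T = auxS T W (n + 1) := by
  have hp : ∀ i : ℕ, (W.map (T ^ i)).map T = W.map (T ^ (i + 1)) := by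
    intro i
    rw [← Submodule.map_comp, pow_succ']
    rfl
  apply le_antisymm
  · apply sup_le
    · exact iSup_le fun i => auxS_le T W (by omega)
    · rw [Submodule.map_le_iff_le_comap]
      refine iSup_le fun i => ?_
      rw [← Submodule.map_le_iff_le_comap, hp]
      exact auxS_le T W (by omega)
  · rw [auxS_succ]
    refine sup_le_sup le_rfl ?_
    obtain ⟨k, rfl⟩ := Nat.exists_eq_add_of_lt hn
    rw [zero_add, ← hp]
    exact Submodule.map_mono (auxS_le T W (by omega))

open Module in
theorem auxS_finrank_add {F V : Type*} [Field F] [AddCommGroup V] [Module F V]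
    [FiniteDimensional F V]
    (T : V →ₗ[F] V) (W : Submodule F V) (j k : ℕ) :
    finrank F (auxS T W (j + k)) ≤ finrank F (auxS T W j) + k * finrank F W := by
  induction k with
  | zero => simp
  | succ k ih =>
    rw [← add_assoc, auxS_succ]
    have h1 := Submodule.finrank_add_le_finrank_add_finrank (auxS T W (j + k)) (W.map (T ^ (j + k)))
    have h2 := Submodule.finrank_map_le (T ^ (j + k)) W
    rw [add_one_mul]
    omega

open Module in
theorem auxS_finrank {F V : Type*} [Field F] [AddCommGroup V] [Module F V]
    [FiniteDimensional F V] (m d : ℕ) (hdim : finrank F V = m * d)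
    (T : V →ₗ[F] V) (W : Submodule F V) (hW : finrank F W = m) (h : auxS T W d = ⊤)
    (j : ℕ) (hj : j ≤ d) : finrank F (auxS T W j) = j * m := by
  obtain ⟨k, rfl⟩ := Nat.exists_eq_add_of_le hj
  have h1 := auxS_finrank_add T W j k
  have h2 := auxS_finrank_add T W 0 j
  have h0 : auxS T W 0 = ⊥ := by simp [auxS]
  rw [h, finrank_top, hdim, hW] at h1
  rw [h0, finrank_bot, hW, zero_add] at h2
  have : m * (j + k) = j * m + k * m := by ring
  omega

open Module in
theorem aux_indep {F V : Type*} [Field F] [AddCommGroup V] [Module F V]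
    [FiniteDimensional F V] (m d : ℕ) (hdim : finrank F V = m * d)
    (T : V →ₗ[F] V) (W : Submodule F V) (hW : finrank F W = m) (h : auxS T W d = ⊤) :
    iSupIndep (fun i : Fin d => W.map (T ^ (i : ℕ))) := by
  classical
  apply iSupIndep_of_dfinsupp_lsum_injective
  set p : Fin d → Submodule F V := fun i : Fin d => W.map (T ^ (i : ℕ))
  have hs : Function.Surjective (DFinsupp.lsum ℕ (fun i => (p i).subtype)) := by
    have := Submodule.iSup_eq_range_dfinsupp_lsum p
    have h' : iSup p = ⊤ := h
    rw [h'] at this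
    exact LinearMap.range_eq_top.mp this.symm
  let e : (Π₀ i, p i) ≃ₗ[F] (Π i, p i) := DFinsupp.linearEquivFunOnFintype
  have : FiniteDimensional F (Π₀ i, p i) := Module.Finite.equiv e.symm
  have hle : finrank F (Π₀ i, p i) ≤ m * d := by
    rw [e.finrank_eq, finrank_pi_fintype]
    calc _ ≤ ∑ i : Fin d, m := Finset.sum_le_sum fun i _ => by
            rw [← hW]; exact Submodule.finrank_map_le _ _
      _ = m * d := by simp [mul_comm]
  have hge := LinearMap.finrank_le_finrank_of_surjective
    (f := (DFinsupp.lsum ℕ (fun i => (p i).subtype) : (Π₀ i, p i) →ₗ[F] V)) hs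
  have heq : finrank F (Π₀ i, p i) = finrank F V := le_antisymm (hle.trans hdim.ge) hge
  exact (LinearMap.injective_iff_surjective_of_finrank_eq_finrank heq).mpr hs

open Module in
theorem aux_main (F V : Type*) [Field F]
    [AddCommGroup V] [Module F V] [FiniteDimensional F V]
    (m d : ℕ) (hd : 0 < d) (hdim : Module.finrank F V = m * d)
    (T : V →ₗ[F] V) :
    tupleSet T (d - 1) (fun i => ((d - 1 - (i : ℕ)) * m, (d - 2 - (i : ℕ)) * m)) =
      {f | ∃ W : Submodule F V, Module.finrank F W = m ∧
        iSupIndep (fun i : Fin d => W.map (T ^ (i : ℕ))) ∧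
        (⨆ i : Fin d, W.map (T ^ (i : ℕ))) = ⊤ ∧
        f = fun k : Fin (d - 1) => ⨆ i : Fin (d - 1 - (k : ℕ)), W.map (T ^ (i : ℕ))} := by
  apply Set.Subset.antisymm
  · rintro f ⟨hf, hc⟩
    simp only [pairSet, Set.mem_setOf_eq] at hf
    suffices ∃ W : Submodule F V, finrank F W = m ∧ auxS T W d = ⊤ ∧
        ∀ k : Fin (d - 1), f k = auxS T W (d - 1 - (k : ℕ)) by
      obtain ⟨W, h1, h2, h3⟩ := this
      exact ⟨W, h1, aux_indep m d hdim T W h1 h2, h2, funext h3⟩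
    rcases Nat.lt_or_ge 1 d with h1 | h1
    · have key : ∀ i, finrank F ↥(f i ⊔ (f i).map T) = (d - i) * m := by
        intro i
        have h := aux_dim T (f i)
        rw [(hf i).1, (hf i).2] at h
        have hi := i.2
        obtain ⟨k, hk⟩ : ∃ k, d = k + 2 + i := ⟨d - 2 - i, by omega⟩
        have e1 : d - 1 - i = k + 1 := by omega
        have e2 : d - 2 - i = k := by omega
        have e3 : d - i = k + 2 := by omega
        rw [e1, e2] at h
        rw [e3]
        linarith
      have step : ∀ (j : ℕ) (hj : j < d - 1),
          f ⟨d - 2 - j, by omega⟩ = auxS T (f ⟨d - 2, by omega⟩) (j + 1) := by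
        intro j
        induction j with
        | zero => intro hj; rw [zero_add, auxS_one]; rfl
        | succ j ih =>
          intro hj
          rw [← auxS_map _ _ _ (Nat.succ_pos j), ← ih (by omega)]
          symm
          have e : (⟨d - 2 - j, by omega⟩ : Fin (d - 1)) =
              ⟨(d - 2 - (j + 1)) + 1, by omega⟩ := by
            ext; simp; omega
          apply Submodule.eq_of_le_of_finrank_eq
          · rw [e]
            exact hc ⟨d - 2 - (j + 1), by omega⟩ _
          · rw [key, (hf _).1]
            congr 1
            simp only
            omega
      refine ⟨f ⟨d - 2, by omega⟩, ?_, ?_, ?_⟩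
      · rw [(hf _).1]
        have : d - 1 - (d - 2) = 1 := by omega
        simp [this]
      · have h := auxS_map T (f ⟨d - 2, by omega⟩) (d - 2 + 1) (by omega)
        rw [← step _ (by omega)] at h
        have e : d - 2 + 1 + 1 = d := by omega
        rw [e] at h
        rw [← h]
        apply Submodule.eq_top_of_finrank_eq
        rw [key, hdim]
        simp [mul_comm]
      · intro k
        have hk := k.2
        have h := step (d - 2 - k) (by omega)
        have e : (⟨d - 2 - (d - 2 - k), by omega⟩ : Fin (d - 1)) = k := by
          ext; simp; omega
        have e2 : d - 2 - k + 1 = d - 1 - k := by omega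
        rw [e, e2] at h
        exact h
    · have : d = 1 := by omega
      subst this
      refine ⟨⊤, by simp [hdim], auxS_one _ _, fun k => k.elim0⟩
  · rintro f ⟨W, hW, -, h, rfl⟩
    have hS := auxS_finrank m d hdim T W hW h
    refine ⟨fun i => ⟨hS _ (by omega), ?_⟩, fun i hi => ?_⟩
    · change finrank F ↥(auxS T W (d - 1 - i) ⊓ (auxS T W (d - 1 - i)).comap T) = (d - 2 - i) * m
      have h := aux_dim T (auxS T W (d - 1 - i))
      have hi := i.2
      rw [auxS_map _ _ _ (by omega), hS _ (by omega), hS _ (by omega)] at h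
      obtain ⟨k, hk⟩ : ∃ k, d = k + 2 + i := ⟨d - 2 - i, by omega⟩
      have e1 : d - 1 - i = k + 1 := by omega
      have e2 : d - 2 - i = k := by omega
      rw [e1] at h
      rw [e1, e2]
      linarith
    · change auxS T W (d - 1 - (i + 1)) ⊔ (auxS T W (d - 1 - (i + 1))).map T ≤ auxS T W (d - 1 - i)
      rw [auxS_map _ _ _ (by omega)]
      have : d - 1 - (i + 1) + 1 = d - 1 - i := by omega
      rw [this]

/-- `[((d−1)m,(d−2)m),…,(2m,m),(m,0)]_T` consists exactly of the tuples
`(⊕_{i<d-1} TⁱW, …, W ⊕ TW, W)` where `W` runs over `m`-dimensional subspaces with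
`V = W ⊕ TW ⊕ ⋯ ⊕ T^{d-1}W`; in particular `σ(m,d;T)` equals its cardinality. -/
theorem tupleSet_eq_splitting (F V : Type*) [Field F] [Fintype F]
    [AddCommGroup V] [Module F V] [FiniteDimensional F V]
    (m d : ℕ) (hm : 0 < m) (hd : 0 < d) (hdim : Module.finrank F V = m * d)
    (T : V →ₗ[F] V) :
    tupleSet T (d - 1) (fun i => ((d - 1 - (i : ℕ)) * m, (d - 2 - (i : ℕ)) * m)) =
      {f | ∃ W : Submodule F V, Module.finrank F W = m ∧
        iSupIndep (fun i : Fin d => W.map (T ^ (i : ℕ))) ∧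
        (⨆ i : Fin d, W.map (T ^ (i : ℕ))) = ⊤ ∧
        f = fun k : Fin (d - 1) => ⨆ i : Fin (d - 1 - (k : ℕ)), W.map (T ^ (i : ℕ))} ∧
    splitCount T m d =
      Set.ncard (tupleSet T (d - 1)
        (fun i => ((d - 1 - (i : ℕ)) * m, (d - 2 - (i : ℕ)) * m))) := by
  refine ⟨aux_main F V m d hd hdim T, ?_⟩
  rw [aux_main F V m d hd hdim T, splitCount]
  let G : Submodule F V → (Fin (d - 1) → Submodule F V) :=
    fun W k => auxS T W (d - 1 - (k : ℕ))
  have hG : Set.InjOn G {W : Submodule F V | IsSplittingSubspace T m d W} := by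
    intro W hW W' hW' h
    rcases Nat.lt_or_ge 1 d with h1 | h1
    · have h2 : auxS T W (d - 1 - (d - 2)) = auxS T W' (d - 1 - (d - 2)) :=
        congrFun h ⟨d - 2, by omega⟩
      have e : d - 1 - (d - 2) = 1 := by omega
      rwa [e, auxS_one, auxS_one] at h2
    · have : d = 1 := by omega
      subst this
      have a : auxS T W 1 = ⊤ := hW.2.2
      have b : auxS T W' 1 = ⊤ := hW'.2.2
      rw [auxS_one] at a b
      rw [a, b]
  rw [← Set.ncard_image_of_injOn hG]
  congr 1
  ext f
  constructor
  · rintro ⟨W, ⟨h1, h2, h3⟩, rfl⟩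
    exact ⟨W, h1, h2, h3, rfl⟩
  · rintro ⟨W, h1, h2, h3, rfl⟩
    exact ⟨W, ⟨h1, h2, h3⟩, rfl⟩
end

section
/- For nonnegative integers a ≥ b ≥ d ≥ c and any q, the identity Σ_s [a−b choose b−s]_q [b−c choose s−c]_q [s−c choose d−c]_q q^{(b−s)^2} = [b−c choose d−c]_q [a−d choose b−d]_q holds, where the sum is over all integers s (only finitely many terms are nonzero). -/
/-- Gaussian binomial coefficient `[n choose k]_q`. -/
def gaussNat (q : ℕ) : ℕ → ℕ → ℕ
  | _, 0 => 1
  | 0, _ + 1 => 0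
  | n + 1, k + 1 => gaussNat q n k + q ^ (k + 1) * gaussNat q n (k + 1)

/-- Gaussian binomial coefficient `[n choose k]_q` with integer arguments; it is `0`
unless `0 ≤ k ≤ n`. -/
def gaussZ (q : ℕ) (n k : ℤ) : ℕ :=
  if 0 ≤ k ∧ k ≤ n then gaussNat q n.toNat k.toNat else 0

theorem gN_zero (q n : ℕ) : gaussNat q n 0 = 1 := by cases n <;> simp [gaussNat]

theorem gN_succ (q n k : ℕ) : gaussNat q (n+1) (k+1) =
    gaussNat q n k + q ^ (k + 1) * gaussNat q n (k + 1) := by simp [gaussNat]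

theorem gN_lt (q n : ℕ) : ∀ k, n < k → gaussNat q n k = 0 := by
  induction n with
  | zero => intro k hk; obtain ⟨k, rfl⟩ : ∃ l, k = l + 1 := ⟨k - 1, by omega⟩; simp [gaussNat]
  | succ n ih =>
    intro k hk; obtain ⟨k, rfl⟩ : ∃ l, k = l + 1 := ⟨k - 1, by omega⟩
    rw [gN_succ, ih k (by omega), ih (k+1) (by omega)]; simp

theorem gN_self (q n : ℕ) : gaussNat q n n = 1 := by
  induction n with
  | zero => exact gN_zero q 0
  | succ n ih => rw [gN_succ, ih, gN_lt q n (n+1) (by omega)]; simp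

theorem gN_tri (q : ℕ) : ∀ n i j k : ℕ, i + j + k = n →
    gaussNat q n (i+j) * gaussNat q (i+j) i = gaussNat q n i * gaussNat q (j+k) j := by
  intro n
  induction n with
  | zero =>
    intro i j k h
    obtain ⟨rfl, rfl, rfl⟩ : i = 0 ∧ j = 0 ∧ k = 0 := by omega
    simp
  | succ n ih =>
    intro i j k h
    rcases i with _ | i
    · have : n + 1 = j + k := by omega
      simp [gN_zero, this]
    rcases j with _ | j
    · simp [gN_zero, gN_self]
    rcases k with _ | k
    · have : n + 1 = i + 1 + (j + 1) := by omega
      simp [gN_self, this]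
    have h1 := ih i (j+1) (k+1) (by omega)
    have h2 := ih (i+1) j (k+1) (by omega)
    have h3 := ih (i+1) (j+1) k (by omega)
    have e1 : i + 1 + (j + 1) = (i + j + 1) + 1 := by omega
    have e2 : j + 1 + (k + 1) = (j + k + 1) + 1 := by omega
    have e3 : i + (j + 1) = i + j + 1 := by omega
    have e4 : i + 1 + j = i + j + 1 := by omega
    have e5 : j + (k + 1) = j + k + 1 := by omega
    have e6 : j + 1 + k = j + k + 1 := by omega
    rw [e3, e2] at h1
    rw [e4, e5] at h2
    rw [e1, e6] at h3
    rw [e1, e2]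
    calc gaussNat q (n+1) (i+j+1+1) * gaussNat q (i+j+1+1) (i+1)
        = gaussNat q n (i+j+1) * gaussNat q (i+j+1+1) (i+1) + q^(i+j+1+1) *
            (gaussNat q n (i+j+1+1) * gaussNat q (i+j+1+1) (i+1)) := by
          rw [gN_succ q n]; ring
      _ = gaussNat q n (i+j+1) * gaussNat q (i+j+1) i
          + q^(i+1) * (gaussNat q n (i+j+1) * gaussNat q (i+j+1) (i+1)) + q^(i+j+1+1) *
            (gaussNat q n (i+j+1+1) * gaussNat q (i+j+1+1) (i+1)) := by
          rw [gN_succ q (i+j+1) i]; ring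
      _ = gaussNat q n i * gaussNat q (j+k+1+1) (j+1)
          + q^(i+1) * gaussNat q n (i+1) * gaussNat q (j+k+1+1) (j+1) := by
          rw [h1, h2, h3, gN_succ q (j+k+1) j]; ring
      _ = _ := by rw [gN_succ q n i]; ring

theorem gN_vand (q m n : ℕ) : ∀ k : ℕ,
    ∑ p ∈ Finset.HasAntidiagonal.antidiagonal k, q ^ (p.1 * (n - p.2)) * gaussNat q m p.1 * gaussNat q n p.2
      = gaussNat q (m + n) k := by
  induction n with
  | zero =>
    intro k
    rcases k with _ | k
    · simp [gN_zero]
    · rw [Finset.Nat.sum_antidiagonal_succ']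
      simp [gN_zero, gaussNat]
  | succ n ih =>
    intro k
    rcases k with _ | k
    · simp [gN_zero]
    · rw [← Nat.add_assoc, gN_succ, ← ih k, ← ih (k+1), Finset.Nat.sum_antidiagonal_succ',
        Finset.Nat.sum_antidiagonal_succ', mul_add, Finset.mul_sum, add_left_comm,
        ← Finset.sum_add_distrib]
      simp only [gN_zero]
      rw [add_comm]
      try rw [add_comm (Finset.sum _ _)]
      congr 1
      · simp only [Nat.sub_zero]; ring
      · apply Finset.sum_congr rfl
        rintro ⟨j, l⟩ hp
        have hp : j + l = k := by simpa using hp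
        subst hp
        simp only [gN_succ, Nat.add_sub_add_right]
        by_cases hl : l + 1 ≤ n
        · obtain ⟨t, rfl⟩ := Nat.exists_eq_add_of_le hl
          have e1 : l + 1 + t - l = t + 1 := by omega
          have e2 : l + 1 + t - (l + 1) = t := by omega
          rw [e1, e2]; ring
        · rw [gN_lt q n (l+1) (by omega)]; ring

theorem gZ_nat (q n k : ℕ) : gaussZ q (n : ℤ) (k : ℤ) = gaussNat q n k := by
  unfold gaussZ
  split_ifs with h
  · simp
  · rw [gN_lt]; omega

/-- for `a ≥ b ≥ d ≥ c`,
`Σ_s [a−b, b−s]_q [b−c, s−c]_q [s−c, d−c]_q q^{(b−s)²} = [b−c, d−c]_q [a−d, b−d]_q`,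
the sum being over all integers `s` (only finitely many terms are nonzero). -/
theorem gauss_identity_second (q : ℕ) (a b c d : ℕ)
    (hcd : c ≤ d) (hdb : d ≤ b) (hba : b ≤ a) :
    (∑ᶠ s : ℤ, gaussZ q ((a : ℤ) - b) ((b : ℤ) - s) * gaussZ q ((b : ℤ) - c) (s - c) *
        gaussZ q (s - c) ((d : ℤ) - c) *
        q ^ (((b : ℤ) - s).natAbs ^ 2)) =
      gaussZ q ((b : ℤ) - c) ((d : ℤ) - c) * gaussZ q ((a : ℤ) - d) ((b : ℤ) - d) := by
  obtain ⟨k, rfl⟩ := Nat.exists_eq_add_of_le hcd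
  obtain ⟨N, rfl⟩ := Nat.exists_eq_add_of_le hdb
  obtain ⟨m, rfl⟩ := Nat.exists_eq_add_of_le hba
  rw [finsum_eq_sum_of_support_subset
    (s := (Finset.range (N+1)).image (fun j : ℕ => ((c + k + N : ℕ) : ℤ) - j))]
  · rw [Finset.sum_image (by intro x _ y _ h; simpa using h)]
    have r1 : (((c + k + N : ℕ) : ℤ) - c) = ((k + N : ℕ) : ℤ) := by push_cast; ring
    have r2 : (((c + k : ℕ) : ℤ) - c) = (k : ℤ) := by push_cast; ring
    have r3 : (((c + k + N + m : ℕ) : ℤ) - (c + k : ℕ)) = ((m + N : ℕ) : ℤ) := by push_cast; ring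
    have r4 : (((c + k + N : ℕ) : ℤ) - (c + k : ℕ)) = (N : ℤ) := by push_cast; ring
    have r5 : (((c + k + N + m : ℕ) : ℤ) - (c + k + N : ℕ)) = (m : ℤ) := by push_cast; ring
    rw [r1, r2, r3, r4, r5, gZ_nat, gZ_nat, ← gN_vand q m N N,
      Finset.Nat.sum_antidiagonal_eq_sum_range_succ_mk, Finset.mul_sum]
    apply Finset.sum_congr rfl
    intro j hj
    have hj : j ≤ N := by simpa [Nat.lt_succ_iff] using hj
    obtain ⟨t, rfl⟩ := Nat.exists_eq_add_of_le hj
    have r6 : (((c + k + (j + t) : ℕ) : ℤ) - j - c) = ((k + t : ℕ) : ℤ) := by push_cast; ring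
    have r7 : (((c + k + (j + t) : ℕ) : ℤ) - (((c + k + (j + t) : ℕ) : ℤ) - j)) = (j : ℤ) := by
      ring
    have r8 : j + t - t = j := by omega
    have r9 : j + t - j = t := by omega
    rw [r6, r7, gZ_nat, gZ_nat, gZ_nat, Int.natAbs_natCast]
    simp only [r9, r8]
    have h := gN_tri q (k + (j + t)) k t j (by omega)
    rw [add_comm t j] at h
    rw [mul_assoc (gaussNat q m j), h]
    ring
  · intro s hs
    simp only [Finset.coe_image, Set.mem_image, Finset.coe_range, Set.mem_Iio]
    have h1 : 0 ≤ ((c + k + N : ℕ) : ℤ) - s := by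
      by_contra hn
      apply hs
      simp only [gaussZ, hn, false_and, if_false, zero_mul]
    have h2 : ((c + k : ℕ) : ℤ) - c ≤ s - c := by
      by_contra hn
      apply hs
      simp only [gaussZ, hn, and_false, if_false, mul_zero, zero_mul]
    refine ⟨(((c + k + N : ℕ) : ℤ) - s).toNat, ?_, ?_⟩ <;> omega
end
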